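/- Let Ξ be a measurable space, X a nonempty set, and f : X × Ξ → ℝ such that for every x ∈ X the function f(x,·) is integrable with respect to every probability measure on Ξ. Define the pseudometric 𝕕(P₁,P₂) := sup_{x∈X} |∫ f(x,·) dP₁ − ∫ f(x,·) dP₂| and assume Δ := sup over all pairs of probability measures (P₁,P₂) of 𝕕(P₁,P₂) is finite. Let d be a real-valued function on pairs of probability measures on Ξ satisfying: d ≥ 0; d(P,P) = 0 for every P; d(P₁,P₂) = d(P₂,P₁); d(P₁,P₂) ≤ d(P₁,P₃) + d(P₃,P₂); and convexity in the first argument, d((1−α)·P₁ + α·P₃, P₂) ≤ (1−α)·d(P₁,P₂) + α·d(P₃,P₂) for all α ∈ [0,1]. Fix probability measures P̂ and P* on Ξ and r > 0, and set 𝒫_N := {P : d(P, P̂) ≤ r} and 𝒫̂ := {P : d(P, P*) ≤ r}. Then ℍ(𝒫_N, 𝒫̂) ≤ (Δ/r)·d(P̂, P*). -/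

import Mathlib

open MeasureTheory

/-- The mixture `(1-α)·P + α·Q` of two measures. -/
noncomputable def mix {Ξ : Type*} [MeasurableSpace Ξ] (α : ℝ) (P Q : Measure Ξ) : Measure Ξ :=
  ENNReal.ofReal (1 - α) • P + ENNReal.ofReal α • Q

/-- The pseudometric `𝕕(P₁,P₂) = sup_{x ∈ X} |∫ f(x,·) dP₁ − ∫ f(x,·) dP₂|`. -/
noncomputable def pseudoDist {Ξ X : Type*} [MeasurableSpace Ξ] (f : X → Ξ → ℝ)
    (P₁ P₂ : Measure Ξ) : ℝ :=
  ⨆ x : X, |(∫ ξ, f x ξ ∂P₁) - ∫ ξ, f x ξ ∂P₂|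

/-- The Hausdorff distance `ℍ(𝒫₁,𝒫₂)` between two sets of measures under `pseudoDist`. -/
noncomputable def hausdorffDistSets {Ξ X : Type*} [MeasurableSpace Ξ] (f : X → Ξ → ℝ)
    (𝒜₁ 𝒜₂ : Set (Measure Ξ)) : ℝ :=
  max (⨆ Q : 𝒜₁, ⨅ P : 𝒜₂, pseudoDist f (Q : Measure Ξ) (P : Measure Ξ))
      (⨆ Q : 𝒜₂, ⨅ P : 𝒜₁, pseudoDist f (Q : Measure Ξ) (P : Measure Ξ))

/-!
Retract the first ambiguity set into the second by pulling each of its members `P` towards the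
second center `B`. If `δ` is the distance between the centers, then `d P B ≤ r + δ` by the triangle
inequality, so by convexity moving `P` the fraction `δ / (r + δ)` of the way to `B` brings it within
`d`-distance `r` of `B`. As integrals are affine in the measure, this costs only
`δ / (r + δ) * pseudoDist f P B ≤ δ / r * Δ`.
-/

section Mix

variable {Ξ : Type*} [MeasurableSpace Ξ] {α : ℝ} {P Q : Measure Ξ}

theorem isProbabilityMeasure_mix (hα : α ∈ Set.Icc (0 : ℝ) 1)
    [IsProbabilityMeasure P] [IsProbabilityMeasure Q] : IsProbabilityMeasure (mix α P Q) where
  measure_univ := by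
    simp [mix, ← ENNReal.ofReal_add (sub_nonneg.2 hα.2) hα.1]

theorem integral_mix {E : Type*} [NormedAddCommGroup E] [NormedSpace ℝ E] {g : Ξ → E}
    (hα : α ∈ Set.Icc (0 : ℝ) 1) (hP : Integrable g P) (hQ : Integrable g Q) :
    ∫ ξ, g ξ ∂mix α P Q = (1 - α) • ∫ ξ, g ξ ∂P + α • ∫ ξ, g ξ ∂Q := by
  rw [mix, integral_add_measure (hP.smul_measure ENNReal.ofReal_ne_top)
    (hQ.smul_measure ENNReal.ofReal_ne_top), integral_smul_measure, integral_smul_measure,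
    ENNReal.toReal_ofReal (sub_nonneg.2 hα.2), ENNReal.toReal_ofReal hα.1]

end Mix

section PseudoDist

variable {Ξ X : Type*} [MeasurableSpace Ξ] {f : X → Ξ → ℝ}

theorem pseudoDist_nonneg (f : X → Ξ → ℝ) (P Q : Measure Ξ) : 0 ≤ pseudoDist f P Q :=
  Real.iSup_nonneg fun _ => abs_nonneg _

theorem pseudoDist_mix_right {α : ℝ} {P Q : Measure Ξ} (hα : α ∈ Set.Icc (0 : ℝ) 1)
    (hP : ∀ x, Integrable (f x) P) (hQ : ∀ x, Integrable (f x) Q) :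
    pseudoDist f P (mix α P Q) = α * pseudoDist f P Q := by
  rw [pseudoDist, pseudoDist, Real.mul_iSup_of_nonneg hα.1]
  refine iSup_congr fun x => ?_
  calc |∫ ξ, f x ξ ∂P - ∫ ξ, f x ξ ∂mix α P Q|
      = |α * (∫ ξ, f x ξ ∂P - ∫ ξ, f x ξ ∂Q)| := by
        rw [integral_mix hα (hP x) (hQ x), smul_eq_mul, smul_eq_mul]
        ring_nf
    _ = α * |∫ ξ, f x ξ ∂P - ∫ ξ, f x ξ ∂Q| := by rw [abs_mul, abs_of_nonneg hα.1]

theorem iInf_pseudoDist_le {𝒜 : Set (Measure Ξ)} {Q : Measure Ξ} (P : Measure Ξ) (hQ : Q ∈ 𝒜) :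
    ⨅ Q' : 𝒜, pseudoDist f P (Q' : Measure Ξ) ≤ pseudoDist f P Q :=
  ciInf_le ⟨0, Set.forall_mem_range.2 fun _ => pseudoDist_nonneg f P _⟩ (⟨Q, hQ⟩ : 𝒜)

theorem iSup_iInf_pseudoDist_le {𝒜₁ 𝒜₂ : Set (Measure Ξ)} {c : ℝ} (hc : 0 ≤ c)
    (h : ∀ P ∈ 𝒜₁, ∃ Q ∈ 𝒜₂, pseudoDist f P Q ≤ c) :
    ⨆ P : 𝒜₁, ⨅ Q : 𝒜₂, pseudoDist f (P : Measure Ξ) (Q : Measure Ξ) ≤ c := by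
  refine Real.iSup_le (fun P => ?_) hc
  obtain ⟨Q, hQ, hPQ⟩ := h P P.2
  exact (iInf_pseudoDist_le (P : Measure Ξ) hQ).trans hPQ

theorem hausdorffDistSets_le {𝒜₁ 𝒜₂ : Set (Measure Ξ)} {c : ℝ} (hc : 0 ≤ c)
    (h₁₂ : ∀ P ∈ 𝒜₁, ∃ Q ∈ 𝒜₂, pseudoDist f P Q ≤ c)
    (h₂₁ : ∀ P ∈ 𝒜₂, ∃ Q ∈ 𝒜₁, pseudoDist f P Q ≤ c) :
    hausdorffDistSets f 𝒜₁ 𝒜₂ ≤ c :=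
  max_le (iSup_iInf_pseudoDist_le hc h₁₂) (iSup_iInf_pseudoDist_le hc h₂₁)

end PseudoDist

section AmbiguitySet

variable {Ξ : Type*} [MeasurableSpace Ξ] {d : Measure Ξ → Measure Ξ → ℝ}

/-- The distance-based ambiguity set: the closed `d`-ball of radius `r` around `B` in the space of
probability measures. The center is the second argument of `d`, in whose first argument convexity is
assumed. -/
def ambiguitySet (d : Measure Ξ → Measure Ξ → ℝ) (B : Measure Ξ) (r : ℝ) : Set (Measure Ξ) :=
  {P | IsProbabilityMeasure P ∧ d P B ≤ r}

variable {P B : Measure Ξ} [IsProbabilityMeasure P] [IsProbabilityMeasure B] {r δ : ℝ}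

theorem mix_mem_ambiguitySet (hr : 0 < r) (hδ : 0 ≤ δ)
    (hconv : ∀ α ∈ Set.Icc (0 : ℝ) 1, d (mix α P B) B ≤ (1 - α) * d P B)
    (hPB : d P B ≤ r + δ) : mix (δ / (r + δ)) P B ∈ ambiguitySet d B r := by
  have hα : δ / (r + δ) ∈ Set.Icc (0 : ℝ) 1 :=
    unitInterval.div_mem hδ (by positivity) (by linarith)
  refine ⟨isProbabilityMeasure_mix hα, ?_⟩
  calc d (mix (δ / (r + δ)) P B) B
      ≤ (1 - δ / (r + δ)) * d P B := hconv _ hα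
    _ ≤ (1 - δ / (r + δ)) * (r + δ) := mul_le_mul_of_nonneg_left hPB (sub_nonneg.2 hα.2)
    _ = r := by field_simp; ring

theorem exists_mem_ambiguitySet_pseudoDist_le {X : Type*} {f : X → Ξ → ℝ}
    (hfP : ∀ x, Integrable (f x) P) (hfB : ∀ x, Integrable (f x) B) (hr : 0 < r) (hδ : 0 ≤ δ)
    (hconv : ∀ α ∈ Set.Icc (0 : ℝ) 1, d (mix α P B) B ≤ (1 - α) * d P B)
    (hPB : d P B ≤ r + δ) :
    ∃ Q ∈ ambiguitySet d B r, pseudoDist f P Q ≤ δ / r * pseudoDist f P B := by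
  have hα : δ / (r + δ) ∈ Set.Icc (0 : ℝ) 1 :=
    unitInterval.div_mem hδ (by positivity) (by linarith)
  refine ⟨mix (δ / (r + δ)) P B, mix_mem_ambiguitySet hr hδ hconv hPB, ?_⟩
  rw [pseudoDist_mix_right hα hfP hfB]
  gcongr
  · exact pseudoDist_nonneg f P B
  · linarith

end AmbiguitySet

/-- Hoffman-type lemma for distance-based ambiguity sets:
`ℍ(𝒫_N, 𝒫̂) ≤ (Δ/r)·d(P̂, P*)`. -/
theorem distance_ambiguity_hausdorff_bound
    {Ξ X : Type*} [MeasurableSpace Ξ] [Nonempty X]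
    (f : X → Ξ → ℝ)
    (hint : ∀ x, ∀ P : Measure Ξ, IsProbabilityMeasure P → Integrable (f x) P)
    (Δ : ℝ)
    (hΔbdd : BddAbove {r | ∃ P₁ P₂ : Measure Ξ,
      IsProbabilityMeasure P₁ ∧ IsProbabilityMeasure P₂ ∧ r = pseudoDist f P₁ P₂})
    (hΔ : Δ = sSup {r | ∃ P₁ P₂ : Measure Ξ,
      IsProbabilityMeasure P₁ ∧ IsProbabilityMeasure P₂ ∧ r = pseudoDist f P₁ P₂})
    (d : Measure Ξ → Measure Ξ → ℝ)
    (hd_nonneg : ∀ P Q : Measure Ξ, IsProbabilityMeasure P → IsProbabilityMeasure Q →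
      0 ≤ d P Q)
    (hd_refl : ∀ P : Measure Ξ, IsProbabilityMeasure P → d P P = 0)
    (hd_symm : ∀ P Q : Measure Ξ, IsProbabilityMeasure P → IsProbabilityMeasure Q →
      d P Q = d Q P)
    (hd_tri : ∀ P Q R : Measure Ξ, IsProbabilityMeasure P → IsProbabilityMeasure Q →
      IsProbabilityMeasure R → d P Q ≤ d P R + d R Q)
    (hd_conv : ∀ α ∈ Set.Icc (0:ℝ) 1, ∀ P₁ P₃ P₂ : Measure Ξ,
      IsProbabilityMeasure P₁ → IsProbabilityMeasure P₃ → IsProbabilityMeasure P₂ →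
      d (mix α P₁ P₃) P₂ ≤ (1 - α) * d P₁ P₂ + α * d P₃ P₂)
    (Phat Pstar : Measure Ξ) [IsProbabilityMeasure Phat] [IsProbabilityMeasure Pstar]
    (r : ℝ) (hr : 0 < r) :
    hausdorffDistSets f {P | IsProbabilityMeasure P ∧ d P Phat ≤ r}
        {P | IsProbabilityMeasure P ∧ d P Pstar ≤ r} ≤
      (Δ / r) * d Phat Pstar := by
  have hle (P Q : Measure Ξ) (hP : IsProbabilityMeasure P) (hQ : IsProbabilityMeasure Q) :
      pseudoDist f P Q ≤ Δ :=
    hΔ ▸ le_csSup hΔbdd ⟨P, Q, hP, hQ, rfl⟩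
  have hΔ_nonneg : 0 ≤ Δ := (pseudoDist_nonneg f Phat Pstar).trans (hle _ _ ‹_› ‹_›)
  have hretract (A B : Measure Ξ) [hA : IsProbabilityMeasure A] [hB : IsProbabilityMeasure B] :
      ∀ P ∈ ambiguitySet d A r, ∃ Q ∈ ambiguitySet d B r, pseudoDist f P Q ≤ Δ / r * d A B := by
    rintro P ⟨hP, hPA⟩
    have hδ : 0 ≤ d A B := hd_nonneg A B hA hB
    have hconv (α : ℝ) (hα : α ∈ Set.Icc (0 : ℝ) 1) : d (mix α P B) B ≤ (1 - α) * d P B := by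
      simpa [hd_refl B hB] using hd_conv α hα P B B hP hB hB
    have hPB : d P B ≤ r + d A B := (hd_tri P B A hP hB hA).trans (by gcongr)
    obtain ⟨Q, hQ, hPQ⟩ := exists_mem_ambiguitySet_pseudoDist_le
      (hint · P hP) (hint · B hB) hr hδ hconv hPB
    refine ⟨Q, hQ, hPQ.trans ?_⟩
    calc d A B / r * pseudoDist f P B ≤ d A B / r * Δ := by gcongr; exact hle P B hP hB
      _ = Δ / r * d A B := by ring
  have hc : 0 ≤ Δ / r * d Phat Pstar := mul_nonneg (by positivity) (hd_nonneg _ _ ‹_› ‹_›)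
  exact hausdorffDistSets_le hc (hretract Phat Pstar)
    (hd_symm Phat Pstar ‹_› ‹_› ▸ hretract Pstar Phat)
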